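/- arXiv:1111.2365 — 2 statements merged into one kernel-verified Lean document; each statement's English description precedes it below -/
import Mathlib

section
/- Let n ≥ 1 and d ≥ 2 be integers and let P₁, …, Pₙ ∈ ℂ[x₁,…,xₙ] be polynomials, each of total degree at most d, with the degree-d homogeneous component of some Pᵢ nonzero. Suppose the polynomial vector field P = (P₁,…,Pₙ) on ℂⁿ is complete, i.e. there is a map Φ : ℂ × ℂⁿ → ℂⁿ with Φ(0,p) = p for all p and such that for every p ∈ ℂⁿ the map T ↦ Φ(T,p) has complex derivative P(Φ(T,p)) at every T ∈ ℂ. Then the top-degree homogeneous component of P is not a multiple of the radial vector field: there is no polynomial Q ∈ ℂ[x₁,…,xₙ] such that the degree-d homogeneous component of Pᵢ equals Q·xᵢ for every i = 1,…,n. -/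
open MvPolynomial

theorem aux_eval_smul {n k : ℕ} (p : MvPolynomial (Fin n) ℂ) (hp : p.IsHomogeneous k)
    (c : ℂ) (w : Fin n → ℂ) : eval (fun i => c * w i) p = c ^ k * eval w p := by
  rw [eval_eq, eval_eq, Finset.mul_sum]
  refine Finset.sum_congr rfl fun m hm => ?_
  have h := hp (mem_support_iff.mp hm)
  rw [Finsupp.weight_apply, Finsupp.sum_fintype _ _ (by simp)] at h
  simp only [Pi.one_apply, smul_eq_mul, mul_one] at h
  have h2 : ∏ i, (c * w i) ^ m i = c ^ k * ∏ i, w i ^ m i := by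
    simp_rw [mul_pow]
    rw [Finset.prod_mul_distrib, Finset.prod_pow_eq_pow_sum, h]
  rw [← Finset.prod_subset (Finset.subset_univ m.support),
    ← Finset.prod_subset (Finset.subset_univ m.support)] at h2
  · rw [h2]; ring
  · intro x _ hx; simp [Finsupp.notMem_support_iff.mp hx]
  · intro x _ hx; simp [Finsupp.notMem_support_iff.mp hx]

theorem aux_key {n d : ℕ} (p : MvPolynomial (Fin n) ℂ) (hp : p.totalDegree ≤ d)
    (z : ℂ) (hz : z ≠ 0) (w : Fin n → ℂ) :
    z ^ d * eval (fun i => z⁻¹ * w i) p = eval w (homogeneousComponent d p)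
      + z * ∑ k ∈ Finset.range d, z ^ (d - 1 - k) * eval w (homogeneousComponent k p) := by
  have h1 : p = ∑ k ∈ Finset.range (d + 1), homogeneousComponent k p := by
    conv_lhs => rw [← sum_homogeneousComponent p]
    refine Finset.sum_subset (fun x hx => ?_) (fun x _ hx => ?_)
    · simp only [Finset.mem_range] at *; omega
    · simp only [Finset.mem_range] at *
      exact homogeneousComponent_eq_zero _ _ (by omega)
  conv_lhs => rw [h1]
  rw [map_sum, Finset.sum_range_succ, mul_add, add_comm, Finset.mul_sum, Finset.mul_sum]
  congr 1
  · rw [aux_eval_smul _ (homogeneousComponent_isHomogeneous d p), inv_pow]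
    field_simp
  · refine Finset.sum_congr rfl fun k hk => ?_
    rw [aux_eval_smul _ (homogeneousComponent_isHomogeneous k p), inv_pow]
    have hk' := Finset.mem_range.mp hk
    have : z ^ d = z * z ^ (d - 1 - k) * z ^ k := by
      rw [← pow_succ', ← pow_add]; congr 1; omega
    rw [this]
    field_simp

theorem aux_contDiff {n : ℕ} (p : MvPolynomial (Fin n) ℂ) :
    ContDiff ℝ 1 (fun w : Fin n → ℂ => eval w p) := by
  induction p using MvPolynomial.induction_on with
  | C a => simpa using contDiff_const
  | add p q hp hq => simpa using hp.add hq
  | mul_X p i hp => simpa using hp.mul (contDiff_apply ℝ ℂ i)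

theorem aux_unique {n : ℕ} (P : Fin n → MvPolynomial (Fin n) ℂ) (c : ℝ → ℂ)
    (f g : ℝ → Fin n → ℂ) (a b : ℝ) (hc : ContinuousOn c (Set.Icc a b))
    (hf : ∀ t ∈ Set.Icc a b, HasDerivAt f (fun i => c t * eval (f t) (P i)) t)
    (hg : ∀ t ∈ Set.Icc a b, HasDerivAt g (fun i => c t * eval (g t) (P i)) t)
    (hb : f b = g b) : Set.EqOn f g (Set.Icc a b) := by
  have hfc : ContinuousOn f (Set.Icc a b) := HasDerivAt.continuousOn hf
  have hgc : ContinuousOn g (Set.Icc a b) := HasDerivAt.continuousOn hg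
  obtain ⟨Cf, hCf⟩ := isCompact_Icc.exists_bound_of_continuousOn hfc
  obtain ⟨Cg, hCg⟩ := isCompact_Icc.exists_bound_of_continuousOn hgc
  obtain ⟨M, hM⟩ := isCompact_Icc.exists_bound_of_continuousOn hc
  set B : Set (Fin n → ℂ) := Metric.closedBall 0 (max Cf Cg)
  have hcd : ContDiffOn ℝ 1 (fun w : Fin n → ℂ => fun i => eval w (P i)) B :=
    (contDiff_pi.mpr fun i => aux_contDiff (P i)).contDiffOn
  obtain ⟨K, hK⟩ := hcd.exists_lipschitzOnWith one_ne_zero (convex_closedBall _ _)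
    (isCompact_closedBall _ _)
  refine ODE_solution_unique_of_mem_Icc_left (K := M.toNNReal * K)
    (v := fun t x i => c t * eval x (P i)) (s := fun _ => B)
    ?_ hfc (fun t ht => (hf t (Set.Ioc_subset_Icc_self ht)).hasDerivWithinAt) ?_
    hgc (fun t ht => (hg t (Set.Ioc_subset_Icc_self ht)).hasDerivWithinAt) ?_ hb
  · intro t ht
    have hMt := hM t (Set.Ioc_subset_Icc_self ht)
    have h0 : 0 ≤ M := (norm_nonneg _).trans hMt
    refine LipschitzOnWith.of_dist_le_mul fun x hx y hy => ?_
    have h1 := hK.dist_le_mul x hx y hy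
    have h2 : (fun i => c t * eval x (P i)) = c t • (fun i => eval x (P i)) := rfl
    have h3 : (fun i => c t * eval y (P i)) = c t • (fun i => eval y (P i)) := rfl
    rw [h2, h3, dist_smul₀]
    calc _ ≤ M * (K * dist x y) := by gcongr
      _ = _ := by simp [h0, mul_assoc]
  · intro t ht
    simpa [B] using Or.inl (hCf t (Set.Ioc_subset_Icc_self ht))
  · intro t ht
    simpa [B] using Or.inr (hCg t (Set.Ioc_subset_Icc_self ht))

/-- the top-degree homogeneous component of a complete polynomial
vector field of degree `d ≥ 2` on `ℂⁿ` is not a multiple of the radial vector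
field. -/
theorem stmt_4 (n d : ℕ) (hn : 1 ≤ n) (hd : 2 ≤ d)
    (P : Fin n → MvPolynomial (Fin n) ℂ)
    (hdeg : ∀ i, (P i).totalDegree ≤ d)
    (htop : ∃ i, homogeneousComponent d (P i) ≠ 0)
    (Φ : ℂ → (Fin n → ℂ) → (Fin n → ℂ))
    (hΦ0 : ∀ p, Φ 0 p = p)
    (hflow : ∀ (p : Fin n → ℂ) (T : ℂ) (i : Fin n),
      HasDerivAt (fun s => Φ s p i) (eval (Φ T p) (P i)) T) :
    ¬ ∃ Q : MvPolynomial (Fin n) ℂ,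
        ∀ i, homogeneousComponent d (P i) = Q * X i := by
  rintro ⟨Q, hQ⟩
  obtain ⟨i₀, hi₀⟩ := htop
  obtain ⟨v, hv⟩ : ∃ v, eval v (Q * X i₀) ≠ 0 := by
    by_contra! h
    exact hi₀ ((hQ i₀).trans (MvPolynomial.funext (by simpa using h)))
  simp only [map_mul, eval_X, mul_ne_zero_iff] at hv
  obtain ⟨hQv, hvi⟩ := hv
  let R : ℂ → (Fin n → ℂ) → Fin n → ℂ := fun z w i =>
    ∑ k ∈ Finset.range d, z ^ (d - 1 - k) * eval w (homogeneousComponent k (P i))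
  let V : ℂ × (Fin n → ℂ) × ℂ → ℂ × (Fin n → ℂ) × ℂ := fun u =>
    (- eval u.2.1 Q, R u.1 u.2.1, u.1 ^ (d - 2))
  have hV : ContDiff ℝ 1 V := by
    have h1 : ContDiff ℝ 1 (fun u : ℂ × (Fin n → ℂ) × ℂ => u.2.1) :=
      contDiff_fst.comp contDiff_snd
    refine ContDiff.prodMk ((aux_contDiff Q).comp h1).neg (ContDiff.prodMk ?_ (contDiff_fst.pow _))
    refine contDiff_pi.mpr fun i => ContDiff.sum fun k _ => ?_
    exact (contDiff_fst.pow _).mul ((aux_contDiff _).comp h1)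
  obtain ⟨α, hα0, ε, hε, hα⟩ :=
    (hV.contDiffAt (x := ((0 : ℂ), v, (0 : ℂ)))).exists_forall_mem_closedBall_exists_eq_forall_mem_Ioo_hasDerivAt₀ 0
  simp only [zero_sub, zero_add] at hα
  let z : ℝ → ℂ := fun s => (α s).1
  let w : ℝ → Fin n → ℂ := fun s => (α s).2.1
  let t : ℝ → ℂ := fun s => (α s).2.2
  have hz : ∀ s ∈ Set.Ioo (-ε) ε, HasDerivAt z (- eval (w s) Q) s := fun s hs =>
    (hasFDerivAt_fst (𝕜 := ℝ) (p := α s)).comp_hasDerivAt s (hα s hs)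
  have h2 : ∀ s ∈ Set.Ioo (-ε) ε, HasDerivAt (fun s => (α s).2) (V (α s)).2 s := fun s hs =>
    (hasFDerivAt_snd (𝕜 := ℝ) (p := α s)).comp_hasDerivAt s (hα s hs)
  have hw : ∀ s ∈ Set.Ioo (-ε) ε, HasDerivAt w (R (z s) (w s)) s := fun s hs =>
    (ContinuousLinearMap.fst ℝ (Fin n → ℂ) ℂ).hasFDerivAt.comp_hasDerivAt s (h2 s hs)
  have ht : ∀ s ∈ Set.Ioo (-ε) ε, HasDerivAt t ((z s) ^ (d - 2)) s := fun s hs =>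
    (ContinuousLinearMap.snd ℝ (Fin n → ℂ) ℂ).hasFDerivAt.comp_hasDerivAt s (h2 s hs)
  have hz0 : z 0 = 0 := by simp [z, hα0]
  have hw0 : w 0 = v := by simp [w, hα0]
  have h00 : (0 : ℝ) ∈ Set.Ioo (-ε) ε := ⟨by linarith, hε⟩
  -- z is nonzero near 0
  have hne : ∀ᶠ s in nhdsWithin (0 : ℝ) (Set.Ioi 0), z s ≠ 0 := by
    have := (hz 0 h00).eventually_ne (c := 0) (by rw [hw0]; exact neg_ne_zero.mpr hQv)
    exact this.filter_mono (nhdsWithin_mono _ fun x hx => ne_of_gt hx)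
  obtain ⟨δ, hδ, hzδ⟩ := mem_nhdsGT_iff_exists_Ioo_subset.mp hne
  have hδ' : (0 : ℝ) < δ := hδ
  obtain ⟨b, hb0, hb⟩ := exists_between (lt_min hδ' hε)
  have hbδ : b < δ := hb.trans_le (min_le_left _ _)
  have hbε : b < ε := hb.trans_le (min_le_right _ _)
  have hmem : ∀ s, 0 < s → s ≤ b → s ∈ Set.Ioo (-ε) ε := fun s h1 h2 =>
    ⟨by linarith, by linarith⟩
  have hzne : ∀ s, 0 < s → s ≤ b → z s ≠ 0 := fun s h1 h2 => hzδ ⟨h1, by linarith⟩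
  let x : ℝ → Fin n → ℂ := fun s i => (z s)⁻¹ * w s i
  let y : ℝ → Fin n → ℂ := fun s => Φ (t s - t b) (x b)
  have hx : ∀ s, 0 < s → s ≤ b →
      HasDerivAt x (fun i => (z s) ^ (d - 2) * eval (x s) (P i)) s := by
    intro s h1 h2
    have hs := hmem s h1 h2
    have hzs := hzne s h1 h2
    refine hasDerivAt_pi.mpr fun i => ?_
    have := ((hz s hs).inv hzs).mul (hasDerivAt_pi.mp (hw s hs) i)
    have key := aux_key (P i) (hdeg i) (z s) hzs (w s)
    rw [hQ i, map_mul, eval_X] at key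
    change (z s) ^ d * eval (x s) (P i) = _ + z s * R (z s) (w s) i at key
    have hdd : (z s) ^ d = (z s) ^ (d - 2) * (z s) ^ 2 := by
      rw [← pow_add]; congr 1; omega
    rw [hdd] at key
    have hz2 : (z s) ^ 2 ≠ 0 := pow_ne_zero _ hzs
    have hfin : (z s) ^ (d - 2) * eval (x s) (P i) =
        - -(eval (w s)) Q / z s ^ 2 * w s i + (z s)⁻¹ * R (z s) (w s) i := by
      apply mul_right_cancel₀ hz2
      rw [mul_right_comm, key]
      field_simp
    rw [hfin]
    exact this
  have hy : ∀ s ∈ Set.Ioo (-ε) ε,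
      HasDerivAt y (fun i => (z s) ^ (d - 2) * eval (y s) (P i)) s := by
    intro s hs
    refine hasDerivAt_pi.mpr fun i => ?_
    have := (hflow (x b) (t s - t b) i).comp s ((ht s hs).sub_const (t b))
    rw [mul_comm]
    exact this
  have hxy : ∀ s, 0 < s → s ≤ b → x s = y s := by
    intro a ha hab
    refine aux_unique P (fun s => (z s) ^ (d - 2)) x y a b ?_ ?_ ?_ ?_ ⟨le_rfl, hab⟩
    · intro s hs
      exact ((hz s (hmem s (by linarith [hs.1]) hs.2)).continuousAt.pow _).continuousWithinAt
    · intro s hs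
      exact hx s (by linarith [hs.1]) hs.2
    · intro s hs
      exact hy s (hmem s (by linarith [hs.1]) hs.2)
    · simp [y, hΦ0]
  have hlim1 : Filter.Tendsto (fun s => z s * y s i₀) (nhdsWithin 0 (Set.Ioi 0)) (nhds 0) := by
    have h : ContinuousAt (fun s => z s * y s i₀) 0 :=
      (hz 0 h00).continuousAt.mul (hasDerivAt_pi.mp (hy 0 h00) i₀).continuousAt
    have h' := h.tendsto
    simp only [hz0, zero_mul] at h'
    exact h'.mono_left nhdsWithin_le_nhds
  have hlim2 : Filter.Tendsto (fun s => w s i₀) (nhdsWithin 0 (Set.Ioi 0)) (nhds (v i₀)) := by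
    have h' := (hasDerivAt_pi.mp (hw 0 h00) i₀).continuousAt.tendsto
    rw [hw0] at h'
    exact h'.mono_left nhdsWithin_le_nhds
  have heq : (fun s => z s * y s i₀) =ᶠ[nhdsWithin 0 (Set.Ioi 0)] (fun s => w s i₀) := by
    filter_upwards [Ioo_mem_nhdsGT hb0] with s hs
    rw [← hxy s hs.1 hs.2.le]
    exact mul_inv_cancel_left₀ (hzne s hs.1 hs.2.le) _
  exact hvi (tendsto_nhds_unique hlim2 (hlim1.congr' heq))
end

section
/- Let n ≥ 1 and let F : ℂⁿ → ℂⁿ be holomorphic on all of ℂⁿ. Let r > 0, s > 0, T₀ ∈ ℂ, and let S ⊆ ℂⁿ be a set such that for every p ∈ S there exists a map ψ : ℂ → ℂⁿ with ψ(0) = p and such that ψ has complex derivative F(ψ(T)) at every T in the open disc of radius r about 0. Suppose φ : ℂ → ℂⁿ has complex derivative F(φ(T)) at every T in the open disc B(T₀,s) of radius s about T₀, and φ(T) ∈ S for every T ∈ B(T₀,s). Then there exists Φ : ℂ → ℂⁿ which has complex derivative F(Φ(T)) at every T in the open disc B(T₀, s+r) and which agrees with φ on B(T₀,s). -/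
open Metric

lemma aux_lip {n : ℕ} (F : (Fin n → ℂ) → (Fin n → ℂ)) (hF : Differentiable ℂ F) (R : ℝ) :
    ∃ K : NNReal, LipschitzOnWith K F (closedBall 0 R) := by
  obtain ⟨M, hM⟩ := (isCompact_closedBall (0 : Fin n → ℂ) (R + 1)).exists_bound_of_continuousOn
    hF.continuous.continuousOn
  have key : ∀ x ∈ closedBall (0 : Fin n → ℂ) R, ‖fderiv ℂ F x‖₊ ≤ Real.toNNReal M := by
    intro x hx
    have hx' : ‖x‖ ≤ R := by simpa using hx
    have hM0 : 0 ≤ M := (norm_nonneg _).trans (hM x (by simp; linarith))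
    rw [← NNReal.coe_le_coe, coe_nnnorm, Real.coe_toNNReal _ hM0]
    have h1 : ∀ v : Fin n → ℂ, ‖v‖ ≤ 1 → ‖fderiv ℂ F x v‖ ≤ M := by
      intro v hv
      have hl : ∀ z : ℂ, HasDerivAt (fun z : ℂ => x + z • v) v z := by
        intro z
        simpa using ((hasDerivAt_id z).smul_const v).const_add x
      have hd : Differentiable ℂ (fun z : ℂ => F (x + z • v)) := fun z =>
        (hF _).comp z (hl z).differentiableAt
      have h0 : HasDerivAt (fun z : ℂ => F (x + z • v)) (fderiv ℂ F x v) 0 := by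
        have h2 : HasFDerivAt F (fderiv ℂ F x) (x + (0 : ℂ) • v) := by
          simpa using (hF x).hasFDerivAt
        exact h2.comp_hasDerivAt (0 : ℂ) (hl 0)
      have := Complex.norm_deriv_le_of_forall_mem_sphere_norm_le (c := 0) (R := 1) (C := M)
        one_pos hd.diffContOnCl (by
          intro z hz
          apply hM
          have hz' : ‖z‖ = 1 := by simpa using hz
          rw [mem_closedBall_zero_iff]
          calc ‖x + z • v‖ ≤ ‖x‖ + ‖z • v‖ := norm_add_le _ _
            _ ≤ R + 1 := by rw [norm_smul, hz']; linarith)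
      rw [h0.deriv] at this
      simpa using this
    exact ContinuousLinearMap.opNorm_le_of_unit_norm hM0 (fun v hv => h1 v hv.le)
  exact ⟨_, Convex.lipschitzOnWith_of_nnnorm_fderiv_le (𝕜 := ℂ) (fun x _ => hF x) key
    (convex_closedBall _ _)⟩

lemma aux_unique_s13 {n : ℕ} (F : (Fin n → ℂ) → (Fin n → ℂ)) (hF : Differentiable ℂ F)
    (U : Set ℂ) (hU : Convex ℝ U) (f g : ℂ → (Fin n → ℂ))
    (hf : ∀ T ∈ U, HasDerivAt f (F (f T)) T) (hg : ∀ T ∈ U, HasDerivAt g (F (g T)) T)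
    (a b : ℂ) (ha : a ∈ U) (hb : b ∈ U) (hab : f a = g a) : f b = g b := by
  have hmem : ∀ t ∈ Set.Icc (0:ℝ) 1, a + (t:ℂ) * (b - a) ∈ U := by
    intro t ht
    have := hU.add_smul_sub_mem ha hb ht
    simpa using this
  have hl : ∀ t : ℝ, HasDerivAt (fun t : ℝ => a + (t:ℂ) * (b - a)) (b - a) t := by
    intro t
    simpa using ((Complex.ofRealCLM.hasDerivAt (x := t)).mul_const (b - a)).const_add a
  have hD : ∀ f : ℂ → (Fin n → ℂ), (∀ T ∈ U, HasDerivAt f (F (f T)) T) →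
      ∀ t ∈ Set.Icc (0:ℝ) 1, HasDerivAt (fun t : ℝ => f (a + (t:ℂ) * (b - a)))
        ((b - a) • F (f (a + (t:ℂ) * (b - a)))) t := by
    intro f hf t ht
    exact (hf _ (hmem t ht)).scomp t (hl t)
  have hB : ∀ f : ℂ → (Fin n → ℂ), (∀ T ∈ U, HasDerivAt f (F (f T)) T) →
      ContinuousOn (fun t : ℝ => f (a + (t:ℂ) * (b - a))) (Set.Icc (0:ℝ) 1) :=
    fun f hf t ht => (hD f hf t ht).continuousAt.continuousWithinAt
  obtain ⟨R₁, h₁⟩ := isCompact_Icc.exists_bound_of_continuousOn (hB f hf)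
  obtain ⟨R₂, h₂⟩ := isCompact_Icc.exists_bound_of_continuousOn (hB g hg)
  obtain ⟨K, hK⟩ := aux_lip F hF (max R₁ R₂)
  have hL : LipschitzOnWith (‖b - a‖₊ * K) (fun x => (b - a) • F x)
      (closedBall 0 (max R₁ R₂)) := by
    apply LipschitzOnWith.of_dist_le_mul
    intro x hx y hy
    rw [dist_smul₀, NNReal.coe_mul, mul_assoc, coe_nnnorm]
    exact mul_le_mul_of_nonneg_left (hK.dist_le_mul x hx y hy) (norm_nonneg _)
  have := dist_le_of_trajectories_ODE_of_mem (a := 0) (b := 1) (δ := 0)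
    (v := fun _ x => (b - a) • F x) (s := fun _ => closedBall 0 (max R₁ R₂))
    (fun _ _ => hL) (hB f hf)
    (fun t ht => (hD f hf t (Set.Ico_subset_Icc_self ht)).hasDerivWithinAt)
    (fun t ht => mem_closedBall_zero_iff.2
      ((h₁ t (Set.Ico_subset_Icc_self ht)).trans (le_max_left _ _)))
    (hB g hg)
    (fun t ht => (hD g hg t (Set.Ico_subset_Icc_self ht)).hasDerivWithinAt)
    (fun t ht => mem_closedBall_zero_iff.2
      ((h₂ t (Set.Ico_subset_Icc_self ht)).trans (le_max_right _ _)))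
    (by simp [hab]) 1 (by simp)
  simpa using this

/-- uniform extension principle for holomorphic ODEs: if every
point of `S` admits a local solution of `ψ' = F(ψ)` on a disc of uniform
radius `r`, and `φ` solves the equation on `B(T₀,s)` with values in `S`, then
`φ` extends to a solution on `B(T₀, s+r)`. -/
theorem stmt_13 (n : ℕ) (hn : 1 ≤ n) (F : (Fin n → ℂ) → (Fin n → ℂ))
    (hF : Differentiable ℂ F) (r s : ℝ) (hr : 0 < r) (hs : 0 < s)
    (T₀ : ℂ) (S : Set (Fin n → ℂ))
    (hS : ∀ p ∈ S, ∃ ψ : ℂ → (Fin n → ℂ), ψ 0 = p ∧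
      ∀ T ∈ ball (0 : ℂ) r, HasDerivAt ψ (F (ψ T)) T)
    (φ : ℂ → (Fin n → ℂ))
    (hφ : ∀ T ∈ ball T₀ s, HasDerivAt φ (F (φ T)) T)
    (hφS : ∀ T ∈ ball T₀ s, φ T ∈ S) :
    ∃ Φ : ℂ → (Fin n → ℂ),
      (∀ T ∈ ball T₀ (s + r), HasDerivAt Φ (F (Φ T)) T) ∧
      ∀ T ∈ ball T₀ s, Φ T = φ T := by
  choose! ψ hψ0 hψ using hS
  set G : ℂ → ℂ → (Fin n → ℂ) := fun T z => ψ (φ T) (z - T) with hG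
  have hG0 : ∀ T ∈ ball T₀ s, G T T = φ T := by
    intro T hT
    simp [hG, hψ0 _ (hφS T hT)]
  have hGd : ∀ T ∈ ball T₀ s, ∀ z ∈ ball T r, HasDerivAt (G T) (F (G T z)) z := by
    intro T hT z hz
    have := hψ _ (hφS T hT) (z - T) (by simpa [dist_eq_norm] using hz)
    exact this.comp_sub_const z T
  have hGφ : ∀ T ∈ ball T₀ s, ∀ z ∈ ball T r, z ∈ ball T₀ s → G T z = φ z := by
    intro T hT z hz hz'
    exact aux_unique_s13 F hF (ball T r ∩ ball T₀ s) ((convex_ball _ _).inter (convex_ball _ _))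
      (G T) φ (fun w hw => hGd T hT w hw.1) (fun w hw => hφ w hw.2) T z
      ⟨mem_ball_self hr, hT⟩ ⟨hz, hz'⟩ (hG0 T hT)
  have hGG : ∀ T ∈ ball T₀ s, ∀ T' ∈ ball T₀ s, ∀ z ∈ ball T r, z ∈ ball T' r →
      G T z = G T' z := by
    intro T hT T' hT' z hz hz'
    have hd : dist T T' < 2 * r := by
      have := dist_triangle_left T T' z
      rw [mem_ball] at hz hz'
      linarith
    have hm1 : midpoint ℝ T T' ∈ ball T r := by
      rw [mem_ball, dist_midpoint_left]
      norm_num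
      linarith
    have hm2 : midpoint ℝ T T' ∈ ball T' r := by
      rw [mem_ball, dist_midpoint_right]
      norm_num
      linarith
    have hm : midpoint ℝ T T' ∈ ball T₀ s := (convex_ball T₀ s).midpoint_mem hT hT'
    exact aux_unique_s13 F hF (ball T r ∩ ball T' r) ((convex_ball _ _).inter (convex_ball _ _))
      (G T) (G T') (fun w hw => hGd T hT w hw.1) (fun w hw => hGd T' hT' w hw.2) _ z
      ⟨hm1, hm2⟩ ⟨hz, hz'⟩ ((hGφ T hT _ hm1 hm).trans (hGφ T' hT' _ hm2 hm).symm)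
  have hcov : ∀ z ∈ ball T₀ (s + r), ∃ T, T ∈ ball T₀ s ∧ z ∈ ball T r := by
    intro z hz
    have hz' : ‖z - T₀‖ < s + r := by simpa [dist_eq_norm] using hz
    have hsr : 0 < s + r := by linarith
    refine ⟨T₀ + ((s / (s + r) : ℝ) : ℂ) * (z - T₀), ?_, ?_⟩
    · rw [mem_ball, dist_eq_norm, add_sub_cancel_left, norm_mul, Complex.norm_real,
        Real.norm_of_nonneg (by positivity), div_mul_eq_mul_div, div_lt_iff₀ hsr]
      exact mul_lt_mul_of_pos_left hz' hs
    · have : z - (T₀ + ((s / (s + r) : ℝ) : ℂ) * (z - T₀))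
          = ((r / (s + r) : ℝ) : ℂ) * (z - T₀) := by
        have h1 : r / (s + r) = 1 - s / (s + r) := by field_simp; ring
        rw [h1]; push_cast; ring
      rw [mem_ball, dist_eq_norm, this, norm_mul, Complex.norm_real,
        Real.norm_of_nonneg (by positivity), div_mul_eq_mul_div, div_lt_iff₀ hsr]
      exact mul_lt_mul_of_pos_left hz' hr
  choose! c hc1 hc2 using hcov
  have hsub : ∀ T ∈ ball T₀ s, ∀ z ∈ ball T r, z ∈ ball T₀ (s + r) := by
    intro T hT z hz
    rw [mem_ball] at *
    linarith [dist_triangle z T T₀]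
  have hΦ : ∀ T ∈ ball T₀ s, ∀ z ∈ ball T r, G (c z) z = G T z := by
    intro T hT z hz
    have h := hsub T hT z hz
    exact hGG _ (hc1 z h) T hT z (hc2 z h) hz
  refine ⟨fun z => G (c z) z, ?_, ?_⟩
  · intro z hz
    refine (hGd _ (hc1 z hz) z (hc2 z hz)).congr_of_eventuallyEq ?_
    filter_upwards [isOpen_ball.mem_nhds (hc2 z hz)] with w hw
    exact hΦ _ (hc1 z hz) w hw
  · intro z hz
    exact (hΦ z hz z (mem_ball_self hr)).trans (hG0 z hz)
end
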